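/- Let n ≥ 3, k ≥ 1 be integers and q ≥ 3 a prime. Then v_q(σ_k(n)) < (q−2)·log γ(n)/log q + (1.385 log k + 1.066)·log n/(log q · log log n) + 4(log log log n + 1)/log q, where γ(n) is the squarefree kernel of n. -/

import Mathlib

open ArithmeticFunction Real

/-!
If `p ^ a` exactly divides `n`, the factor of `σ_k(n)` at `p` is the geometric sum
`(p ^ (k * (a + 1)) - 1) / (p ^ k - 1)`. Lifting the exponent from the order of `p` modulo `q` shows
that its `q`-part is at most `(p ^ (q - 2) + p ^ (q - 3)) * k * (a + 1) / 2`. Taking logarithms and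
summing over `p` gives `(q - 2) log γ(n) + ω(n) log k` plus the sum of the
`log ((1 + 1 / p) (a + 1) / 2)`.

The bound `ω(n) ≤ 1.385 log n / log log n` holds because `n` is at least the product of the first
`ω(n)` primes; the tangents of `log` reduce it to a check for `ω(n) ≤ 12` and to
`m log m ≤ log (p₁ ⋯ pₘ)` for `m ≥ 13`. In the remaining sum, the terms of the primes above a cutoff
are bounded by small multiples of `a log p`, and `∑ a log p = log n`; the primes below it are few.
When `log log n ≥ 9` the cutoff is `(log n) ^ (1 / 3)` and a small prime contributes at most
`1 + log log n`; when `1 ≤ log log n ≤ 9` the cutoff `10` suffices, and for smaller `n` none is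
needed.
-/

theorem natCast_pow_eq_one_iff_dvd_pow_sub_one {q b : ℕ} (hb : b ≠ 0) (m : ℕ) :
    (b : ZMod q) ^ m = 1 ↔ q ∣ b ^ m - 1 := by
  rw [← Nat.modEq_iff_dvd' (Nat.one_le_pow _ _ (Nat.pos_of_ne_zero hb)),
    ← ZMod.natCast_eq_natCast_iff, Nat.cast_one, Nat.cast_pow, eq_comm]

section LiftingTheExponent

variable {q b k n x : ℕ} [hq : Fact q.Prime]

/- When the order is `q - 1 = 2 * r`, only the factor `b ^ r + 1` of `b ^ (q - 1) - 1` is divisible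
by `q`; this saves the exponent `r`. -/
theorem pow_padicValNat_pow_orderOf_sub_one_le (hq3 : 3 ≤ q) (hb : 2 ≤ b) (hqb : ¬ q ∣ b) :
    q ^ padicValNat q (b ^ orderOf (b : ZMod q) - 1) ≤ b ^ (q - 2) + b ^ (q - 3) := by
  set e := orderOf (b : ZMod q)
  have he_dvd : e ∣ q - 1 := orderOf_dvd_of_pow_eq_one <|
    ZMod.pow_card_sub_one_eq_one (by rwa [Ne, ZMod.natCast_eq_zero_iff])
  have he_le : e ≤ q - 1 := Nat.le_of_dvd (by omega) he_dvd
  have he_pos : 0 < e := Nat.pos_of_dvd_of_pos he_dvd (by omega)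
  have hdvd : q ^ padicValNat q (b ^ e - 1) ∣ b ^ e - 1 := pow_padicValNat_dvd
  obtain heq | hlt := he_le.eq_or_lt
  · obtain ⟨r, hr⟩ := hq.out.even_sub_one (by omega)
    have hfactor : b ^ e - 1 = (b ^ r + 1) * (b ^ r - 1) := by
      rw [heq, hr, ← Nat.sq_sub_sq, ← pow_mul, mul_two, one_pow]
    have hqr : ¬ q ∣ b ^ r - 1 := by
      rw [← natCast_pow_eq_one_iff_dvd_pow_sub_one (by omega)]
      exact pow_ne_one_of_lt_orderOf (by omega) (by omega)
    have hcop : Nat.Coprime (q ^ padicValNat q (b ^ e - 1)) (b ^ r - 1) :=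
      ((hq.out.coprime_iff_not_dvd).2 hqr).pow_left _
    calc q ^ padicValNat q (b ^ e - 1) ≤ b ^ r + 1 :=
          Nat.le_of_dvd (by positivity) (hcop.dvd_of_dvd_mul_right (hfactor ▸ hdvd))
      _ ≤ b ^ (q - 2) + b ^ (q - 3) :=
          add_le_add (Nat.pow_le_pow_right (by omega) (by omega)) (Nat.one_le_pow _ _ (by omega))
  · have hone_lt : 1 < b ^ e := Nat.one_lt_pow he_pos.ne' hb
    calc q ^ padicValNat q (b ^ e - 1) ≤ b ^ e - 1 := Nat.le_of_dvd (by omega) hdvd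
      _ ≤ b ^ e := Nat.sub_le _ _
      _ ≤ b ^ (q - 2) := Nat.pow_le_pow_right (by omega) (by omega)
      _ ≤ b ^ (q - 2) + b ^ (q - 3) := Nat.le_add_right _ _

theorem padicValNat_pow_sub_one_of_dvd_sub_one (hq2 : q ≠ 2) (hx : 1 < x) (hqx : q ∣ x - 1)
    (hn : n ≠ 0) :
    padicValNat q (x ^ n - 1) = padicValNat q (x - 1) + padicValNat q n := by
  have hq_not_dvd : ¬ q ∣ x := fun h ↦ hq.out.one_lt.ne' <| Nat.dvd_one.1 <| by
    simpa [Nat.sub_sub_self hx.le] using Nat.dvd_sub h hqx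
  simpa using padicValNat.pow_sub_pow (hq.out.odd_of_ne_two hq2) hx hqx hq_not_dvd hn

theorem padicValNat_pow_sub_one_of_orderOf_dvd (hq2 : q ≠ 2) (hb : 1 < b) (hn : n ≠ 0)
    (h : orderOf (b : ZMod q) ∣ n) :
    padicValNat q (b ^ n - 1) = padicValNat q (b ^ orderOf (b : ZMod q) - 1) +
      padicValNat q (n / orderOf (b : ZMod q)) := by
  obtain ⟨t, rfl⟩ := h
  obtain ⟨he, ht⟩ := mul_ne_zero_iff.1 hn
  rw [Nat.mul_div_cancel_left t (Nat.pos_of_ne_zero he), pow_mul]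
  refine padicValNat_pow_sub_one_of_dvd_sub_one hq2 (Nat.one_lt_pow he hb) ?_ ht
  rw [← natCast_pow_eq_one_iff_dvd_pow_sub_one (by omega), pow_orderOf_eq_one]

theorem padicValNat_geomSum_add (hx : 1 < x) (hn : n ≠ 0) :
    padicValNat q (∑ i ∈ Finset.range n, x ^ i) + padicValNat q (x - 1) =
      padicValNat q (x ^ n - 1) := by
  rw [← geom_sum_mul_of_one_le hx.le n, padicValNat.mul _ (by omega)]
  exact (geom_sum_pos (Nat.zero_le x) hn).ne'

theorem two_mul_pow_padicValNat_geomSum_le_of_not_dvd (hq3 : 3 ≤ q) (hb : 2 ≤ b) (hk : k ≠ 0)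
    (hn : n ≠ 0) (hqS : q ∣ ∑ i ∈ Finset.range n, (b ^ k) ^ i) (hqb : ¬ q ∣ b ^ k - 1) :
    2 * q ^ padicValNat q (∑ i ∈ Finset.range n, (b ^ k) ^ i) ≤
      (b ^ (q - 2) + b ^ (q - 3)) * (k * n) := by
  have hbk : 1 < b ^ k := Nat.one_lt_pow hk hb
  have hqpow : q ∣ b ^ (k * n) - 1 := by
    rw [pow_mul, ← geom_sum_mul_of_one_le hbk.le n]
    exact hqS.mul_right _
  have hqb' : ¬ q ∣ b := fun h ↦ hq.out.one_lt.ne' <| Nat.dvd_one.1 <| by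
    have := Nat.dvd_sub (dvd_pow h (mul_ne_zero hk hn)) hqpow
    rwa [Nat.sub_sub_self (Nat.one_le_pow _ _ (by omega))] at this
  set e := orderOf (b : ZMod q) with he
  have he_dvd : e ∣ k * n :=
    orderOf_dvd_of_pow_eq_one ((natCast_pow_eq_one_iff_dvd_pow_sub_one (by omega) _).2 hqpow)
  have he_two : 2 ≤ e := by
    have he_not_dvd : ¬ e ∣ k := by
      rwa [he, orderOf_dvd_iff_pow_eq_one, natCast_pow_eq_one_iff_dvd_pow_sub_one (by omega)]
    have : e ≠ 0 := ne_zero_of_dvd_ne_zero (mul_ne_zero hk hn) he_dvd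
    have : e ≠ 1 := fun h ↦ he_not_dvd (h ▸ one_dvd k)
    omega
  have hval : padicValNat q (∑ i ∈ Finset.range n, (b ^ k) ^ i) =
      padicValNat q (b ^ e - 1) + padicValNat q (k * n / e) := by
    rw [← padicValNat_pow_sub_one_of_orderOf_dvd (by omega) (by omega) (mul_ne_zero hk hn) he_dvd,
      pow_mul, ← padicValNat_geomSum_add hbk hn, padicValNat.eq_zero_of_not_dvd hqb, add_zero]
  have hquot : 2 * q ^ padicValNat q (k * n / e) ≤ k * n :=
    calc 2 * q ^ padicValNat q (k * n / e) ≤ e * (k * n / e) :=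
          Nat.mul_le_mul he_two <| Nat.le_of_dvd
            (Nat.div_pos (Nat.le_of_dvd (by positivity) he_dvd) (by omega)) pow_padicValNat_dvd
      _ = k * n := Nat.mul_div_cancel' he_dvd
  calc 2 * q ^ padicValNat q (∑ i ∈ Finset.range n, (b ^ k) ^ i)
      = q ^ padicValNat q (b ^ e - 1) * (2 * q ^ padicValNat q (k * n / e)) := by
        rw [hval, pow_add]; ring
    _ ≤ (b ^ (q - 2) + b ^ (q - 3)) * (k * n) :=
        Nat.mul_le_mul (pow_padicValNat_pow_orderOf_sub_one_le hq3 hb hqb') hquot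

theorem two_mul_pow_padicValNat_geomSum_le (hq3 : 3 ≤ q) (hb : 2 ≤ b) (hk : k ≠ 0) (hn : n ≠ 0) :
    2 * q ^ padicValNat q (∑ i ∈ Finset.range n, (b ^ k) ^ i) ≤
      (b ^ (q - 2) + b ^ (q - 3)) * (k * n) := by
  have of_le {y : ℕ} (hy : y ≤ n) : 2 * y ≤ (b ^ (q - 2) + b ^ (q - 3)) * (k * n) := by
    have htwo : 2 ≤ b ^ (q - 2) := hb.trans (Nat.le_self_pow (by omega) b)
    exact Nat.mul_le_mul (by omega) (hy.trans (Nat.le_mul_of_pos_left n (by omega)))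
  by_cases hqS : q ∣ ∑ i ∈ Finset.range n, (b ^ k) ^ i
  · by_cases hqb : q ∣ b ^ k - 1
    · have hbk : 1 < b ^ k := Nat.one_lt_pow hk hb
      have hval : padicValNat q (∑ i ∈ Finset.range n, (b ^ k) ^ i) = padicValNat q n := by
        have := padicValNat_geomSum_add (q := q) hbk hn
        rw [padicValNat_pow_sub_one_of_dvd_sub_one (by omega) hbk hqb hn] at this
        omega
      rw [hval]
      exact of_le (Nat.le_of_dvd (by omega) pow_padicValNat_dvd)
    · exact two_mul_pow_padicValNat_geomSum_le_of_not_dvd hq3 hb hk hn hqS hqb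
  · rw [padicValNat.eq_zero_of_not_dvd hqS, pow_zero]
    exact of_le (by omega)

end LiftingTheExponent

/-- The part of the bound for `v_q(σ_k(p ^ a)) log q` that depends neither on `q` nor on `k`. -/
noncomputable def localExcess (p a : ℕ) : ℝ := Real.log ((1 + 1 / (p : ℝ)) * ((a : ℝ) + 1) / 2)

theorem padicValNat_geomSum_mul_log_le {q b k a : ℕ} (hq : q.Prime) (hq3 : 3 ≤ q) (hb : 2 ≤ b)
    (hk : k ≠ 0) :
    (padicValNat q (∑ i ∈ Finset.range (a + 1), b ^ (i * k)) : ℝ) * Real.log q ≤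
      (q - 2 : ℝ) * Real.log b + Real.log k + localExcess b a := by
  have : Fact q.Prime := ⟨hq⟩
  have hk_pos : (0 : ℝ) < k := by positivity
  have hnat : 2 * q ^ padicValNat q (∑ i ∈ Finset.range (a + 1), b ^ (i * k)) ≤
      (b ^ (q - 2) + b ^ (q - 3)) * (k * (a + 1)) := by
    simpa only [← pow_mul, mul_comm k] using
      two_mul_pow_padicValNat_geomSum_le hq3 hb hk (Nat.succ_ne_zero a)
  have hpow : (b : ℝ) ^ (q - 2) = b ^ (q - 3) * b := by
    rw [← pow_succ, show q - 3 + 1 = q - 2 by omega]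
  have hreal : (q : ℝ) ^ padicValNat q (∑ i ∈ Finset.range (a + 1), b ^ (i * k)) ≤
      (b : ℝ) ^ (q - 2) * k * ((1 + 1 / (b : ℝ)) * ((a : ℝ) + 1) / 2) := by
    have hcast : (2 : ℝ) * q ^ padicValNat q (∑ i ∈ Finset.range (a + 1), b ^ (i * k)) ≤
        (b ^ (q - 2) + b ^ (q - 3)) * (k * (a + 1)) := by exact_mod_cast hnat
    calc (q : ℝ) ^ padicValNat q (∑ i ∈ Finset.range (a + 1), b ^ (i * k))
        ≤ (b ^ (q - 2) + b ^ (q - 3)) * (k * (a + 1)) / 2 := by linarith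
      _ = (b : ℝ) ^ (q - 2) * k * ((1 + 1 / (b : ℝ)) * ((a : ℝ) + 1) / 2) := by
        rw [hpow]; field_simp
  have hlog := log_le_log (by positivity) hreal
  rwa [log_pow, log_mul (by positivity) (by positivity), log_mul (by positivity) hk_pos.ne',
    log_pow, Nat.cast_sub (by omega), Nat.cast_ofNat] at hlog

theorem padicValNat_sigma_eq_sum {n k q : ℕ} (hn : n ≠ 0) (hq : q.Prime) :
    padicValNat q (sigma k n) = ∑ p ∈ n.primeFactors,
      padicValNat q (∑ i ∈ Finset.range (n.factorization p + 1), p ^ (i * k)) := by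
  simp only [sigma_eq_prod_primeFactors_sum_range_factorization_pow_mul hn,
    ← Nat.factorization_def _ hq]
  refine Nat.factorization_prod_apply fun p hp ↦ ?_
  exact (Finset.sum_pos (fun i _ ↦ pow_pos (Nat.pos_of_mem_primeFactors hp) _) (by simp)).ne'

theorem padicValNat_sigma_mul_log_le {n k q : ℕ} (hn : n ≠ 0) (hk : k ≠ 0) (hq : q.Prime)
    (hq3 : 3 ≤ q) :
    (padicValNat q (sigma k n) : ℝ) * Real.log q ≤
      (q - 2 : ℝ) * Real.log (∏ p ∈ n.primeFactors, (p : ℝ)) + n.primeFactors.card * Real.log k +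
        ∑ p ∈ n.primeFactors, localExcess p (n.factorization p) := by
  calc (padicValNat q (sigma k n) : ℝ) * Real.log q
      ≤ ∑ p ∈ n.primeFactors,
          ((q - 2 : ℝ) * Real.log p + Real.log k + localExcess p (n.factorization p)) := by
        rw [padicValNat_sigma_eq_sum hn hq, Nat.cast_sum, Finset.sum_mul]
        exact Finset.sum_le_sum fun p hp ↦ padicValNat_geomSum_mul_log_le hq hq3
          (Nat.prime_of_mem_primeFactors hp).two_le hk
    _ = _ := by
        rw [log_prod fun p hp ↦ Nat.cast_ne_zero.2 (Nat.pos_of_mem_primeFactors hp).ne',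
          Finset.sum_add_distrib, Finset.sum_add_distrib, ← Finset.mul_sum, Finset.sum_const,
          nsmul_eq_mul]

section PrimeProducts

variable {S : Finset ℕ}

theorem primorial_le_prod_of_primeCounting_le_card (hS : ∀ p ∈ S, p.Prime) {x : ℕ}
    (hx : Nat.primeCounting x ≤ S.card) : primorial x ≤ ∏ p ∈ S, p := by
  set P := Nat.primesLE x with hP
  have hcard : (P \ S).card ≤ (S \ P).card := by
    rw [← Nat.primesLE_card_eq_primeCounting, ← hP] at hx
    have hP_card := Finset.card_sdiff_add_card_inter P S
    have hS_card := Finset.card_sdiff_add_card_inter S P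
    rw [Finset.inter_comm] at hS_card
    omega
  have hx_lt : ∀ p ∈ S \ P, x + 1 ≤ p := fun p hp ↦ by
    rw [Finset.mem_sdiff, hP, Nat.mem_primesLE] at hp
    exact Nat.lt_of_not_le fun h ↦ hp.2 ⟨h, hS p hp.1⟩
  calc primorial x = (∏ p ∈ P ∩ S, p) * ∏ p ∈ P \ S, p := by
        rw [primorial_eq_prod_primesLE, Finset.prod_inter_mul_prod_sdiff]
    _ ≤ (∏ p ∈ P ∩ S, p) * (x + 1) ^ (P \ S).card := by
        gcongr
        exact Finset.prod_le_pow_card _ _ _ fun p hp ↦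
          (Nat.le_of_mem_primesLE (Finset.mem_sdiff.1 hp).1).trans x.le_succ
    _ ≤ (∏ p ∈ P ∩ S, p) * (x + 1) ^ (S \ P).card := by gcongr; omega
    _ ≤ (∏ p ∈ P ∩ S, p) * ∏ p ∈ S \ P, p := by
        gcongr
        exact Finset.pow_card_le_prod _ _ _ hx_lt
    _ = ∏ p ∈ S, p := by rw [Finset.inter_comm, Finset.prod_inter_mul_prod_sdiff]

theorem primeCounting'_add_le_add_totient {a x : ℕ} (ha : a ≠ 0) (hax : a < x) :
    Nat.primeCounting' (x + a) ≤ Nat.primeCounting' x + Nat.totient a := by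
  rw [Nat.primeCounting', Nat.count_add, add_le_add_iff_left,
    ← Nat.filter_coprime_Ico_eq_totient a x, Nat.count_eq_card_filter_range]
  refine Finset.card_le_card_of_injOn (x + ·) (fun i hi ↦ ?_) (by simp)
  obtain ⟨hia, hprime⟩ := by simpa using hi
  simpa [hia] using (Nat.coprime_of_lt_prime ha (by omega) hprime).symm

theorem three_mul_primeCounting'_add_two_le {x : ℕ} (hx : 35 ≤ x) :
    3 * Nat.primeCounting' x + 2 ≤ x := by
  induction x using Nat.strong_induction_on with
  | _ x ih =>
    obtain hlt | hge := lt_or_ge x 41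
    · interval_cases x <;> decide
    · obtain ⟨y, rfl⟩ := Nat.exists_eq_add_of_le' (show 6 ≤ x by omega)
      have htotient : Nat.totient 6 = 2 := by decide
      have := primeCounting'_add_le_add_totient (a := 6) (x := y) (by omega) (by omega)
      have := ih y (by omega) (by omega)
      omega

theorem three_mul_card_add_two_le (hS : ∀ p ∈ S, p.Prime) {M : ℕ} (hM : ∀ p ∈ S, p < M)
    (hcard : 12 ≤ S.card) : 3 * S.card + 2 ≤ M := by
  have hle : S.card ≤ Nat.primeCounting' M := by
    rw [← Nat.primesBelow_card_eq_primeCounting']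
    exact Finset.card_le_card fun p hp ↦ Nat.mem_primesBelow.2 ⟨hM p hp, hS p hp⟩
  have hM35 : 35 ≤ M := by
    by_contra! hlt
    have hmono := Nat.monotone_primeCounting' (Nat.le_of_lt_succ hlt)
    have hvalue : Nat.primeCounting' 34 = 11 := by decide
    omega
  have := three_mul_primeCounting'_add_two_le hM35
  omega

theorem card_mul_log_card_le_log_prod (hS : ∀ p ∈ S, p.Prime) (hcard : 13 ≤ S.card) :
    S.card * Real.log S.card ≤ Real.log (∏ p ∈ S, (p : ℝ)) := by
  induction S using Finset.induction_on_max with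
  | empty => simp at hcard
  | insert M S hM ih =>
    have hS' : ∀ p ∈ S, p.Prime := fun p hp ↦ hS p (Finset.mem_insert_of_mem hp)
    have hMS : M ∉ S := fun h ↦ (hM M h).false
    rw [Finset.card_insert_of_notMem hMS] at hcard
    obtain heq | hlt := hcard.eq_or_lt
    · have hprod : ((13 : ℕ) : ℝ) ^ 13 ≤ ∏ p ∈ insert M S, (p : ℝ) := by
        have hle := primorial_le_prod_of_primeCounting_le_card hS (x := 41)
          (by rw [Finset.card_insert_of_notMem hMS, ← heq]; decide)
        rw [show primorial 41 = 304250263527210 by decide] at hle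
        rw [← Nat.cast_prod]
        exact_mod_cast hle.trans' (by norm_num)
      rw [Finset.card_insert_of_notMem hMS, ← heq, ← Real.log_pow]
      exact Real.log_le_log (by norm_num) hprod
    · have hm : (13 : ℝ) ≤ S.card := by exact_mod_cast Nat.le_of_lt_succ hlt
      have hm_pos : (0 : ℝ) < S.card := by linarith
      have hM_large : (3 * S.card + 2 : ℝ) ≤ M := by
        exact_mod_cast three_mul_card_add_two_le hS' hM (by omega)
      have hlogM : 1 + Real.log (S.card + 1) ≤ Real.log M := by
        rw [← Real.log_exp (1 + _), Real.exp_add, Real.exp_log (by positivity)]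
        refine Real.log_le_log (by positivity) (le_trans ?_ hM_large)
        nlinarith [Real.exp_one_lt_d9]
      have hincrement : S.card * Real.log (S.card + 1) ≤ S.card * Real.log S.card + 1 := by
        have := Real.log_le_sub_one_of_pos (show (0 : ℝ) < (S.card + 1) / S.card by positivity)
        rw [Real.log_div (by positivity) hm_pos.ne', add_div, div_self hm_pos.ne',
          add_sub_cancel_left, le_div_iff₀ hm_pos] at this
        linarith
      have hprod_ne : ∏ p ∈ S, (p : ℝ) ≠ 0 :=
        Finset.prod_ne_zero_iff.2 fun p hp ↦ Nat.cast_ne_zero.2 (hS' p hp).ne_zero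
      rw [Finset.card_insert_of_notMem hMS, Finset.prod_insert hMS, Nat.cast_succ,
        Real.log_mul (by linarith) hprod_ne]
      linarith [ih hS' (by omega)]

theorem log_le_div_add_sub_one {x c t : ℝ} (hx : 0 < x) (hc : 0 < c) (hct : c ≤ Real.exp t) :
    Real.log x ≤ x / c + t - 1 := by
  have hlog := Real.log_le_sub_one_of_pos (show 0 < x / c by positivity)
  rw [Real.log_div hx.ne' hc.ne'] at hlog
  linarith [(Real.log_le_iff_le_exp hc).2 hct]

theorem mul_log_le_mul_of_le {m c t κ θ L : ℝ} (hm : 0 ≤ m) (hc : 0 < c) (hct : c ≤ Real.exp t)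
    (hmc : m ≤ κ * c) (hθ : m * (t - 1) ≤ (κ - m / c) * θ) (hL : 0 < L) (hθL : θ ≤ L) :
    m * Real.log L ≤ κ * L := by
  have hκ : 0 ≤ κ - m / c := sub_nonneg.2 ((div_le_iff₀ hc).2 hmc)
  calc m * Real.log L ≤ m * (L / c + t - 1) :=
        mul_le_mul_of_nonneg_left (log_le_div_add_sub_one hL hc hct) hm
    _ = m / c * L + m * (t - 1) := by ring
    _ ≤ m / c * L + (κ - m / c) * L := by
        rw [add_le_add_iff_left]; exact hθ.trans (mul_le_mul_of_nonneg_left hθL hκ)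
    _ = κ * L := by ring

theorem mul_log_le_of_mul_log_le {m κ L : ℝ} (hm : Real.exp 1 ≤ m)
    (hκ : 1 + 1 / Real.exp 1 ≤ κ) (hmL : m * Real.log m ≤ L) : m * Real.log L ≤ κ * L := by
  have hm_pos : 0 < m := (Real.exp_pos 1).trans_le hm
  have hlog_ge : 1 ≤ Real.log m := (Real.le_log_iff_exp_le hm_pos).2 hm
  have hc : 0 < m * Real.log m := by positivity
  have hκ_one : 1 ≤ κ := hκ.trans' (le_add_of_nonneg_right (by positivity))
  have hloglog : Real.log (Real.log m) ≤ (κ - 1) * Real.log m :=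
    calc Real.log (Real.log m) ≤ Real.log m / Real.exp 1 + 1 - 1 :=
          log_le_div_add_sub_one (by linarith) (Real.exp_pos 1) le_rfl
      _ = 1 / Real.exp 1 * Real.log m := by ring
      _ ≤ (κ - 1) * Real.log m := by gcongr; linarith
  refine mul_log_le_mul_of_le hm_pos.le hc (Real.exp_log hc).ge ?_ ?_ (hc.trans_le hmL) hmL
  · calc m = 1 * (m * 1) := by ring
      _ ≤ κ * (m * Real.log m) := by gcongr
  · rw [Real.log_mul hm_pos.ne' (by linarith)]
    field_simp
    linarith

theorem card_mul_log_le_of_primorial (hS : ∀ p ∈ S, p.Prime) {κ L : ℝ} (hL : 0 < L)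
    (hSL : Real.log (∏ p ∈ S, (p : ℝ)) ≤ L) (x N a b r s : ℕ) (c : ℝ)
    (hx : Nat.primeCounting x ≤ S.card) (hN : primorial x = N) (hpos : 0 < b ∧ 0 < s ∧ 0 < c)
    (hab : 2.7182818286 ^ a ≤ (N : ℝ) ^ b) (hrs : c ^ s ≤ 2.7182818283 ^ r)
    (hκ : S.card ≤ κ * c ∧ S.card * ((r / s : ℝ) - 1) ≤ (κ - S.card / c) * (a / b)) :
    S.card * Real.log L ≤ κ * L := by
  obtain ⟨hb, hs, hc⟩ := hpos
  have hN_pos : (0 : ℝ) < N := by exact_mod_cast hN ▸ primorial_pos x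
  have hN_le : Real.log N ≤ L := by
    refine (Real.log_le_log hN_pos ?_).trans hSL
    rw [← Nat.cast_prod, ← hN]
    exact_mod_cast primorial_le_prod_of_primeCounting_le_card hS hx
  have hexp_rs : c ≤ Real.exp (r / s) := by
    have hpow : Real.exp (r / s) ^ s = Real.exp 1 ^ r := by
      rw [← Real.exp_nat_mul, ← Real.exp_nat_mul]
      field_simp
    rw [← pow_le_pow_iff_left₀ hc.le (Real.exp_pos _).le hs.ne', hpow]
    exact hrs.trans (by gcongr; exact Real.exp_one_gt_d9.le)
  have hlogN : (a / b : ℝ) ≤ Real.log N := by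
    rw [div_le_iff₀ (by positivity), mul_comm, ← Real.log_pow,
      Real.le_log_iff_exp_le (by positivity), ← mul_one (a : ℝ), Real.exp_nat_mul]
    exact le_trans (by gcongr; exact Real.exp_one_lt_d9.le) hab
  exact mul_log_le_mul_of_le (Nat.cast_nonneg _) hc hexp_rs hκ.1 hκ.2 hL (hlogN.trans hN_le)

theorem card_mul_log_le (hS : ∀ p ∈ S, p.Prime) {L : ℝ} (hL : 0 < L)
    (hSL : Real.log (∏ p ∈ S, (p : ℝ)) ≤ L) : S.card * Real.log L ≤ 1.385 * L := by
  obtain hge | hlt := le_or_gt 13 S.card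
  · have hge' : (13 : ℝ) ≤ S.card := by exact_mod_cast hge
    refine mul_log_le_of_mul_log_le (by linarith [Real.exp_one_lt_three]) ?_
      ((card_mul_log_card_le_log_prod hS hge).trans hSL)
    have : 1 / Real.exp 1 ≤ 1 / 2.7 := by gcongr; linarith [Real.exp_one_gt_d9]
    norm_num at this ⊢
    linarith
  obtain hle | hgt := le_or_gt S.card 3
  · have hle' : (S.card : ℝ) ≤ 3 := by exact_mod_cast hle
    exact mul_log_le_mul_of_le (c := 2.7) (t := 1) (θ := 0) (Nat.cast_nonneg _) (by norm_num)
      (by linarith [Real.exp_one_gt_d9]) (by linarith) (by norm_num) hL hL.le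
  -- Since `m log L / L` decreases for `L ≥ e`, the extremal `L` is `log N`: the tangent point
  -- `c ≈ e ^ (r / s)` is chosen near it, and `a / b` is a rational lower bound for it.
  have h := card_mul_log_le_of_primorial (κ := 1.385) hS hL hSL
  generalize S.card = m at h hlt hgt ⊢
  interval_cases m
  · exact h 7 210 5 1 2 1 7 (by decide) (by decide) (by norm_num) (by norm_num) (by norm_num)
      (by norm_num)
  · exact h 11 2310 15 2 2 1 7 (by decide) (by decide) (by norm_num) (by norm_num) (by norm_num)
      (by norm_num)
  · exact h 13 30030 41 4 5 2 12 (by decide) (by decide) (by norm_num) (by norm_num) (by norm_num)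
      (by norm_num)
  · exact h 17 510510 13 1 5 2 12.18 (by decide) (by decide) (by norm_num) (by norm_num)
      (by norm_num) (by norm_num)
  · exact h 19 9699690 193 12 8 3 14.39 (by decide) (by decide) (by norm_num) (by norm_num)
      (by norm_num) (by norm_num)
  · exact h 23 223092870 173 9 3 1 20.08 (by decide) (by decide) (by norm_num) (by norm_num)
      (by norm_num) (by norm_num)
  · exact h 29 6469693230 158 7 3 1 20.08 (by decide) (by decide) (by norm_num) (by norm_num)
      (by norm_num) (by norm_num)
  · exact h 31 200560490130 26 1 10 3 28 (by decide) (by decide) (by norm_num) (by norm_num)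
      (by norm_num) (by norm_num)
  · exact h 37 7420738134810 59 2 7 2 33 (by decide) (by decide) (by norm_num) (by norm_num)
      (by norm_num) (by norm_num)

end PrimeProducts

theorem card_primeFactors_mul_log_log_le {n : ℕ} (hn : 2 ≤ n) :
    n.primeFactors.card * Real.log (Real.log n) ≤ 1.385 * Real.log n := by
  refine card_mul_log_le (fun p ↦ Nat.prime_of_mem_primeFactors)
    (Real.log_pos (by exact_mod_cast hn)) ?_
  rw [← Nat.cast_prod]
  refine Real.log_le_log ?_ ?_
  · exact_mod_cast Nat.pos_of_dvd_of_pos n.prod_primeFactors_dvd (by omega)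
  · exact_mod_cast Nat.le_of_dvd (by omega) n.prod_primeFactors_dvd

section LocalExcess

variable {p a : ℕ}

theorem localExcess_le {P c t : ℝ} (hP : 0 < P) (hPp : P ≤ p) (hc : 0 < c)
    (hct : c ≤ Real.exp t) : localExcess p a ≤ (1 + 1 / P) * (a + 1) / 2 / c + t - 1 := by
  have hp_pos : (0 : ℝ) < p := hP.trans_le hPp
  refine (log_le_div_add_sub_one (by positivity) hc hct).trans ?_
  gcongr

theorem localExcess_le_half (hp : 2 ≤ p) : localExcess p a ≤ a / 2 := by
  have h := localExcess_le (p := p) (a := a) (P := 2) (c := 3 / 2) (t := 1 / 2) two_pos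
    (by exact_mod_cast hp) (by norm_num) (by linarith [Real.add_one_le_exp (1 / 2 : ℝ)])
  linarith

theorem localExcess_le_add_mul (hp : 2 ≤ p) : localExcess p a ≤ 1.57 + 0.0625 * a := by
  have hexp : (12 : ℝ) ≤ Real.exp (5 / 2) := by
    have hsq : Real.exp (5 / 2) ^ 2 = Real.exp 1 ^ 5 := by
      rw [← Real.exp_nat_mul, ← Real.exp_nat_mul]
      norm_num
    have hpow : (2.718 : ℝ) ^ 5 ≤ Real.exp 1 ^ 5 := by
      gcongr
      linarith [Real.exp_one_gt_d9]
    exact le_of_sq_le_sq (by rw [hsq]; linarith) (Real.exp_pos _).le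
  have h := localExcess_le (p := p) (a := a) two_pos (by exact_mod_cast hp) (by norm_num) hexp
  linarith

theorem localExcess_le_one_add_log (hp : 2 ≤ p) {L : ℝ} (hL : 1 ≤ L) (ha : a * Real.log p ≤ L) :
    localExcess p a ≤ 1 + Real.log L := by
  have hL_pos : 0 < L := by linarith
  have ha_two : (a : ℝ) * 0.69 ≤ L := by
    refine le_trans (mul_le_mul_of_nonneg_left ?_ (Nat.cast_nonneg a)) ha
    linarith [Real.log_two_gt_d9, Real.log_le_log two_pos (by exact_mod_cast hp : (2 : ℝ) ≤ p)]
  have h := localExcess_le (p := p) (a := a) two_pos (by exact_mod_cast hp) hL_pos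
    (Real.exp_log hL_pos).ge
  have hratio : (1 + 1 / 2 : ℝ) * (a + 1) / 2 / L ≤ 2 := by
    rw [div_le_iff₀ hL_pos]
    linarith
  linarith

theorem localExcess_le_mul_log {P κ : ℝ} (hP : 5 ≤ P) (hPp : P ≤ p)
    (hκ : (1 + 1 / P) / 4 ≤ κ * Real.log P) : localExcess p a ≤ κ * (a * Real.log p) := by
  have hP_pos : 0 < P := by linarith
  have hκ_pos : 0 < κ := pos_of_mul_pos_left (lt_of_lt_of_le (by positivity) hκ)
    (Real.log_nonneg (by linarith))
  have hslope : (1 + 1 / P) / 4 ≤ 0.3 := by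
    have : 1 / P ≤ 1 / 5 := by gcongr
    linarith
  have h := localExcess_le (p := p) (a := a) hP_pos hPp two_pos (Real.exp_log two_pos).ge
  calc localExcess p a ≤ (1 + 1 / P) / 4 * a := by linarith [Real.log_two_lt_d9]
    _ ≤ κ * Real.log p * a := by
      gcongr
      exact hκ.trans (by gcongr)
    _ = κ * (a * Real.log p) := by ring

end LocalExcess

theorem twenty_mul_sub_two_le_exp (x : ℝ) : 20 * (x - 2) ≤ Real.exp x := by
  have hcube : (20 : ℝ) ≤ Real.exp 1 ^ 3 :=
    calc (20 : ℝ) ≤ 2.718 ^ 3 := by norm_num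
      _ ≤ Real.exp 1 ^ 3 := by gcongr; linarith [Real.exp_one_gt_d9]
  calc 20 * (x - 2) ≤ 20 * Real.exp (x - 3) := by linarith [Real.add_one_le_exp (x - 3)]
    _ ≤ Real.exp 1 ^ 3 * Real.exp (x - 3) := by gcongr
    _ = Real.exp x := by
      rw [← Real.exp_nat_mul, ← Real.exp_add]
      ring_nf

theorem mul_exp_lt_of_le_one {u : ℝ} (hu : 0 < u) (hu_one : u ≤ 1) :
    0.73 * Real.exp u < 1.066 * (Real.exp u / u) + 4 * (Real.log u + 1) := by
  have hexp_le : Real.exp u ≤ 2.72 := by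
    linarith [Real.exp_le_exp.2 hu_one, Real.exp_one_lt_d9]
  have hlog : -Real.log u ≤ 1 / u / 4 + 2 * Real.log 2 - 1 := by
    rw [← Real.log_inv, ← one_div]
    refine log_le_div_add_sub_one (by positivity) (by norm_num) ?_
    rw [mul_comm, Real.exp_mul, Real.exp_log two_pos]
    norm_num
  have hdiv : 1 + 1 / u ≤ Real.exp u / u := by
    rw [le_div_iff₀ hu]
    field_simp
    exact Real.add_one_le_exp u
  have hinv : 0 < 1 / u := by positivity
  linarith [Real.log_two_lt_d9]

/- As `u ≤ 9` and `0.1184 < 1.066 / 9`, the term in `exp u` on the left is absorbed. -/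
theorem add_mul_exp_lt_of_one_le_of_le_nine {u : ℝ} (hu : 1 ≤ u) (hu_nine : u ≤ 9) :
    6.28 + 0.1184 * Real.exp u < 1.066 * (Real.exp u / u) + 4 * (Real.log u + 1) := by
  have hlog : 1 - 1 / u ≤ Real.log u := by
    simpa using Real.one_sub_inv_le_log_of_pos (by linarith : 0 < u)
  have hexp : 2.7 ≤ Real.exp u / u := by
    rw [le_div_iff₀ (by linarith)]
    calc 2.7 * u ≤ Real.exp 1 * u := by gcongr; linarith [Real.exp_one_gt_d9]
      _ ≤ Real.exp 1 * Real.exp (u - 1) := by gcongr; linarith [Real.add_one_le_exp (u - 1)]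
      _ = Real.exp u := by rw [← Real.exp_add]; ring_nf
  have hslope : 2.7 * (1.066 - 0.1184 * u) ≤ Real.exp u / u * (1.066 - 0.1184 * u) := by
    gcongr
    linarith
  have hcancel : Real.exp u / u * (1.066 - 0.1184 * u) =
      1.066 * (Real.exp u / u) - 0.1184 * Real.exp u := by
    field_simp
  have hrational : 0.31968 * u + 4 / u < 4.598 := by
    rw [← lt_sub_iff_add_lt', div_lt_iff₀ (by linarith)]
    nlinarith
  have : 4 * (1 / u) = 4 / u := by ring
  linarith

theorem exp_div_three_mul_add_lt_of_nine_le {u : ℝ} (hu : 9 ≤ u) :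
    Real.exp (u / 3) * (1 + u) + 0.79 / u * Real.exp u <
      1.066 * (Real.exp u / u) + 4 * (Real.log u + 1) := by
  set z := Real.exp (u / 3) with hz
  have hz_cube : Real.exp u = z ^ 3 := by
    rw [hz, ← Real.exp_nat_mul]
    ring_nf
  have hz_ge : 20 * (u / 3 - 2) ≤ z := twenty_mul_sub_two_le_exp (u / 3)
  -- `0.276 = 1.066 - 0.79`
  have hsmall : z * (1 + u) ≤ 0.276 * (Real.exp u / u) := by
    rw [← mul_div_assoc, le_div_iff₀ (by linarith), hz_cube]
    have hsq : (1 + u) * u ≤ 0.276 * z ^ 2 := by nlinarith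
    nlinarith [Real.exp_pos (u / 3)]
  have hlog : 0 ≤ Real.log u := Real.log_nonneg (by linarith)
  have : 0.79 / u * Real.exp u = 0.79 * (Real.exp u / u) := by ring
  linarith

theorem primeCounting_le_self (z : ℕ) : Nat.primeCounting z ≤ z := by
  have hsub : Nat.primesLE z ⊆ Finset.Ioc 0 z := fun p hp ↦ by
    rw [Nat.mem_primesLE] at hp
    exact Finset.mem_Ioc.2 ⟨hp.2.pos, hp.1⟩
  simpa only [Nat.primesLE_card_eq_primeCounting, Nat.card_Ioc, Nat.sub_zero] using
    Finset.card_le_card hsub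

theorem one_lt_log_natCast {n : ℕ} (hn : 3 ≤ n) : 1 < Real.log n := by
  rw [Real.lt_log_iff_exp_lt (by positivity)]
  exact Real.exp_one_lt_three.trans_le (by exact_mod_cast hn)

section SumLocalExcess

variable {n : ℕ}

theorem sum_localExcess_le_primeCounting_mul_add {z : ℕ} {C κ : ℝ} (hC : 0 ≤ C)
    (hsmall : ∀ p ∈ n.primeFactors, p ≤ z →
      localExcess p (n.factorization p) ≤ C + κ * (n.factorization p * Real.log p))
    (hlarge : ∀ p ∈ n.primeFactors, z < p →
      localExcess p (n.factorization p) ≤ κ * (n.factorization p * Real.log p)) :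
    ∑ p ∈ n.primeFactors, localExcess p (n.factorization p) ≤
      Nat.primeCounting z * C + κ * Real.log n := by
  have hcard : (n.primeFactors.filter (· ≤ z)).card ≤ Nat.primeCounting z := by
    rw [← Nat.primesLE_card_eq_primeCounting]
    refine Finset.card_le_card fun p hp ↦ ?_
    rw [Finset.mem_filter] at hp
    exact Nat.mem_primesLE.2 ⟨hp.2, Nat.prime_of_mem_primeFactors hp.1⟩
  calc ∑ p ∈ n.primeFactors, localExcess p (n.factorization p)
      ≤ ∑ p ∈ n.primeFactors,
          ((if p ≤ z then C else 0) + κ * (n.factorization p * Real.log p)) := by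
        refine Finset.sum_le_sum fun p hp ↦ ?_
        split_ifs with hpz
        · exact hsmall p hp hpz
        · rw [zero_add]
          exact hlarge p hp (not_le.1 hpz)
    _ = (n.primeFactors.filter (· ≤ z)).card * C + κ * Real.log n := by
        rw [Finset.sum_add_distrib, ← Finset.sum_filter, Finset.sum_const, nsmul_eq_mul,
          ← Finset.mul_sum, Real.log_nat_eq_sum_factorization, Finsupp.sum,
          Nat.support_factorization]
    _ ≤ Nat.primeCounting z * C + κ * Real.log n := by gcongr

theorem sum_localExcess_le_mul_log (n : ℕ) :
    ∑ p ∈ n.primeFactors, localExcess p (n.factorization p) ≤ 0.73 * Real.log n := by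
  have hle (p : ℕ) (hp : p ∈ n.primeFactors) :
      localExcess p (n.factorization p) ≤ 0.73 * (n.factorization p * Real.log p) := by
    have hp_two := (Nat.prime_of_mem_primeFactors hp).two_le
    have hlog : Real.log 2 ≤ Real.log p := Real.log_le_log two_pos (by exact_mod_cast hp_two)
    nlinarith [localExcess_le_half (a := n.factorization p) hp_two, Real.log_two_gt_d9]
  rw [Real.log_nat_eq_sum_factorization, Finsupp.sum, Nat.support_factorization, Finset.mul_sum]
  exact Finset.sum_le_sum hle

theorem sum_localExcess_le_add_mul_log (n : ℕ) :
    ∑ p ∈ n.primeFactors, localExcess p (n.factorization p) ≤ 6.28 + 0.1184 * Real.log n := by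
  have hlog_eleven : 10 / 3 * Real.log 2 ≤ Real.log 11 := by
    have h : Real.log (2 ^ 10) ≤ Real.log (11 ^ 3) := Real.log_le_log (by norm_num) (by norm_num)
    rw [Real.log_pow, Real.log_pow] at h
    norm_num at h
    linarith
  have h := sum_localExcess_le_primeCounting_mul_add (n := n) (z := 10) (C := 1.57) (κ := 0.1184)
    (by norm_num) (fun p hp _ ↦ ?_) fun p _ hpz ↦ ?_
  · rw [show Nat.primeCounting 10 = 4 by decide] at h
    norm_num at h ⊢
    exact h
  · have hp_two := (Nat.prime_of_mem_primeFactors hp).two_le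
    have hlog : Real.log 2 ≤ Real.log p := Real.log_le_log two_pos (by exact_mod_cast hp_two)
    nlinarith [localExcess_le_add_mul (a := n.factorization p) hp_two, Real.log_two_gt_d9]
  · refine localExcess_le_mul_log (P := 11) (by norm_num) (by exact_mod_cast hpz) ?_
    linarith [Real.log_two_gt_d9]

theorem sum_localExcess_le_of_nine_le (hu : 9 ≤ Real.log (Real.log n)) :
    ∑ p ∈ n.primeFactors, localExcess p (n.factorization p) ≤
      Real.exp (Real.log (Real.log n) / 3) * (1 + Real.log (Real.log n)) +
        0.79 / Real.log (Real.log n) * Real.log n := by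
  set u := Real.log (Real.log n)
  set z := Real.exp (u / 3)
  have hL : 1 ≤ Real.log n := by
    by_contra! hlt
    linarith [Real.log_nonpos (Real.log_natCast_nonneg n) hlt.le]
  have hz : 20 ≤ z := by linarith [twenty_mul_sub_two_le_exp (u / 3)]
  have h := sum_localExcess_le_primeCounting_mul_add (n := n) (z := ⌊z⌋₊) (C := 1 + u)
    (κ := 0.79 / u) (by linarith) (fun p hp _ ↦ ?_) fun p _ hpz ↦ ?_
  · refine h.trans ?_
    gcongr
    exact (Nat.cast_le.2 (primeCounting_le_self _)).trans (Nat.floor_le (by linarith))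
  · have hterm : n.factorization p * Real.log p ≤ Real.log n := by
      rw [Real.log_nat_eq_sum_factorization n, Finsupp.sum, Nat.support_factorization]
      exact Finset.single_le_sum (f := fun p ↦ (n.factorization p : ℝ) * Real.log p)
        (fun p _ ↦ by positivity) hp
    have hlocal := localExcess_le_one_add_log (Nat.prime_of_mem_primeFactors hp).two_le hL hterm
    exact hlocal.trans (le_add_of_nonneg_right (by positivity))
  · refine localExcess_le_mul_log (P := z) (by linarith) (Nat.lt_of_floor_lt hpz).le ?_
    have : 1 / z ≤ 1 / 20 := by gcongr
    rw [Real.log_exp]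
    field_simp
    linarith

theorem sum_localExcess_lt (hn : 3 ≤ n) :
    ∑ p ∈ n.primeFactors, localExcess p (n.factorization p) <
      1.066 * (Real.log n / Real.log (Real.log n)) +
        4 * (Real.log (Real.log (Real.log n)) + 1) := by
  have hlog_n : 1 < Real.log n := one_lt_log_natCast hn
  have hu : 0 < Real.log (Real.log n) := Real.log_pos hlog_n
  have hexp : Real.exp (Real.log (Real.log n)) = Real.log n := Real.exp_log (by linarith)
  obtain hle | hgt := le_or_gt (Real.log (Real.log n)) 1
  · have := mul_exp_lt_of_le_one hu hle
    rw [hexp] at this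
    exact (sum_localExcess_le_mul_log n).trans_lt this
  obtain hle | hge := le_total (Real.log (Real.log n)) 9
  · have := add_mul_exp_lt_of_one_le_of_le_nine hgt.le hle
    rw [hexp] at this
    exact (sum_localExcess_le_add_mul_log n).trans_lt this
  · have := exp_div_three_mul_add_lt_of_nine_le hge
    rw [hexp] at this
    exact (sum_localExcess_le_of_nine_le hge).trans_lt this

end SumLocalExcess

/-- Corollary: explicit upper bound for `v_q(σ_k(n))` for `n ≥ 3`, `k ≥ 1`
and a prime `q ≥ 3`, where `γ(n) = ∏_{p ∣ n} p` is the squarefree kernel. -/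
theorem valuation_sigma_k_bound (n k q : ℕ) (hn : 3 ≤ n) (hk : 1 ≤ k) (hq : q.Prime)
    (hq3 : 3 ≤ q) :
    (padicValNat q (sigma k n) : ℝ) <
      (q - 2 : ℝ) * Real.log (∏ p ∈ n.primeFactors, (p : ℝ)) / Real.log q +
      (1.385 * Real.log k + 1.066) * Real.log n / (Real.log q * Real.log (Real.log n)) +
      4 * (Real.log (Real.log (Real.log n)) + 1) / Real.log q := by
  have hn' : n ≠ 0 := by omega
  have hloglog_n : 0 < Real.log (Real.log n) := Real.log_pos (one_lt_log_natCast hn)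
  have hlog_q : 0 < Real.log q := Real.log_pos (by exact_mod_cast hq.one_lt)
  have hvaluation := padicValNat_sigma_mul_log_le hn' (by omega : k ≠ 0) hq hq3
  have homega : n.primeFactors.card * Real.log k ≤
      1.385 * (Real.log n / Real.log (Real.log n)) * Real.log k := by
    gcongr
    rw [← mul_div_assoc, le_div_iff₀ hloglog_n]
    exact card_primeFactors_mul_log_log_le (by omega)
  have hexcess := sum_localExcess_lt hn
  rw [← mul_lt_mul_iff_of_pos_right hlog_q]
  calc _ < (q - 2 : ℝ) * Real.log (∏ p ∈ n.primeFactors, (p : ℝ)) +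
        (1.385 * Real.log k + 1.066) * (Real.log n / Real.log (Real.log n)) +
        4 * (Real.log (Real.log (Real.log n)) + 1) := by linarith
    _ = _ := by field_simp
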